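/- arXiv:2408.06573 — 2 statements merged into one kernel-verified Lean document; each statement's English description precedes it below -/
import Mathlib

section
/- Let μ be a Borel probability measure on ℝ and let G_μ(z) = ∫_ℝ (z − t)⁻¹ dμ(t) for z ∈ ℍ. Then the quantity (1/|G_μ(λ)|²) · ∫_ℝ |(λ − t)⁻¹ − G_μ(λ)|² dμ(t) tends to 0 as λ → ∞ nontangentially; that is, for every C > 0 and ε > 0 there exists R > 0 such that this quantity is less than ε whenever λ ∈ ℍ, |λ| > R, and |Re λ| ≤ C·Im λ. -/
open MeasureTheory

/-!
In the cone `|Re l| ≤ C * Im l` the rescaled resolvent `t ↦ l * (l - t)⁻¹` is bounded by `C + 1`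
uniformly in `l` and `t`, and it tends to `1` pointwise as `l → ∞`. By dominated convergence its
mean tends to `1` and its variance to `0`. The quotient of the variance by the squared modulus of
the mean is invariant under rescaling, so the factor `l` can be removed again.
-/

open Filter Bornology Topology

section NormalizedVariance

variable {Ω E ι : Type*} [MeasurableSpace Ω] [NormedAddCommGroup E]
  {μ : Measure Ω} {l : Filter ι} {F : ι → Ω → E} {b : Ω → ℝ}

lemma tendsto_integral_norm_sq_zero_of_dominated [l.IsCountablyGenerated]
    (hF : ∀ᶠ i in l, AEStronglyMeasurable (F i) μ) (hb : MemLp b 2 μ)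
    (hFb : ∀ᶠ i in l, ∀ᵐ ω ∂μ, ‖F i ω‖ ≤ b ω)
    (hlim : ∀ᵐ ω ∂μ, Tendsto (F · ω) l (𝓝 0)) :
    Tendsto (fun i ↦ ∫ ω, ‖F i ω‖ ^ 2 ∂μ) l (𝓝 0) := by
  rw [← integral_zero Ω ℝ (μ := μ)]
  refine tendsto_integral_filter_of_dominated_convergence (fun ω ↦ b ω ^ 2)
    (hF.mono fun i hi ↦ hi.norm.pow 2) ?_ hb.integrable_sq ?_
  · filter_upwards [hFb] with i hi
    filter_upwards [hi] with ω hω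
    rw [norm_pow, norm_norm]
    gcongr
  · filter_upwards [hlim] with ω hω
    simpa using hω.norm.pow 2

variable [NormedSpace ℝ E]

/-- The variance of a vector-valued function divided by the squared norm of its mean, that is, its
squared coefficient of variation. It is `0` by convention when the mean vanishes. -/
noncomputable def normalizedVariance (f : Ω → E) (μ : Measure Ω) : ℝ :=
  (∫ ω, ‖f ω - ∫ ω', f ω' ∂μ‖ ^ 2 ∂μ) / ‖∫ ω, f ω ∂μ‖ ^ 2

lemma normalizedVariance_const_smul {𝕜 : Type*} [NormedDivisionRing 𝕜] [Module 𝕜 E]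
    [NormSMulClass 𝕜 E] [SMulCommClass ℝ 𝕜 E] {c : 𝕜} (hc : c ≠ 0) (f : Ω → E) (μ : Measure Ω) :
    normalizedVariance (fun ω ↦ c • f ω) μ = normalizedVariance f μ := by
  have hc' : ‖c‖ ^ 2 ≠ 0 := pow_ne_zero 2 (norm_ne_zero_iff.mpr hc)
  simp only [normalizedVariance, integral_smul, ← smul_sub, norm_smul, mul_pow,
    integral_const_mul, mul_div_mul_left _ _ hc']

lemma tendsto_normalizedVariance_zero_of_dominated [CompleteSpace E] [IsProbabilityMeasure μ]
    [l.IsCountablyGenerated] {c : E} (hc : c ≠ 0)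
    (hF : ∀ᶠ i in l, AEStronglyMeasurable (F i) μ) (hb : MemLp b 2 μ)
    (hFb : ∀ᶠ i in l, ∀ᵐ ω ∂μ, ‖F i ω‖ ≤ b ω)
    (hlim : ∀ᵐ ω ∂μ, Tendsto (F · ω) l (𝓝 c)) :
    Tendsto (fun i ↦ normalizedVariance (F i) μ) l (𝓝 0) := by
  have hmean : Tendsto (fun i ↦ ∫ ω, F i ω ∂μ) l (𝓝 c) := by
    simpa using tendsto_integral_filter_of_dominated_convergence b hF hFb
      (hb.integrable one_le_two) hlim
  have hvar : Tendsto (fun i ↦ ∫ ω, ‖F i ω - ∫ ω', F i ω' ∂μ‖ ^ 2 ∂μ) l (𝓝 0) := by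
    refine tendsto_integral_norm_sq_zero_of_dominated (b := fun ω ↦ b ω + (‖c‖ + 1))
      (hF.mono fun i hi ↦ hi.sub aestronglyMeasurable_const) (hb.add (memLp_const _)) ?_ ?_
    · filter_upwards [hFb, hmean.norm.eventually_le_const (lt_add_one ‖c‖)] with i hi hmi
      filter_upwards [hi] with ω hω
      exact (norm_sub_le _ _).trans (add_le_add hω hmi)
    · filter_upwards [hlim] with ω hω
      simpa using hω.sub hmean
  have hc' : ‖c‖ ^ 2 ≠ 0 := pow_ne_zero 2 (norm_ne_zero_iff.mpr hc)
  exact zero_div (‖c‖ ^ 2) ▸ hvar.div (hmean.norm.pow 2) hc'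

end NormalizedVariance

lemma tendsto_mul_inv_sub_cobounded {𝕜 : Type*} [NormedDivisionRing 𝕜] (a : 𝕜) :
    Tendsto (fun z : 𝕜 ↦ z * (z - a)⁻¹) (cobounded 𝕜) (𝓝 1) := by
  have hinv : Tendsto (fun z : 𝕜 ↦ (z - a)⁻¹) (cobounded 𝕜) (𝓝 0) :=
    tendsto_inv₀_cobounded.comp (tendsto_sub_const_cobounded a)
  have hone : Tendsto (fun z : 𝕜 ↦ 1 + a * (z - a)⁻¹) (cobounded 𝕜) (𝓝 1) := by
    simpa using (hinv.const_mul a).const_add 1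
  refine hone.congr' ?_
  filter_upwards [eventually_ne_cobounded a] with z hz
  rw [← mul_inv_cancel₀ (sub_ne_zero.mpr hz), ← add_mul, sub_add_cancel]

section NontangentialLimit

/-- The part of the upper half-plane `ℍ` over which nontangential limits at `∞` are taken: the cone
of points `z ∈ ℍ` with `|Re z| ≤ C * Im z`. -/
def nontangentialCone (C : ℝ) : Set ℂ :=
  {z | 0 < z.im ∧ |z.re| ≤ C * z.im}

/-- The filter of nontangential convergence to `∞` in the upper half-plane, with aperture `C`. A
nontangential limit is a limit along this filter for every `C`. -/
noncomputable def nontangentialAtInfty (C : ℝ) : Filter ℂ :=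
  cobounded ℂ ⊓ 𝓟 (nontangentialCone C)

instance (C : ℝ) : (nontangentialAtInfty C).IsCountablyGenerated := by
  rw [nontangentialAtInfty, ← comap_norm_atTop]
  infer_instance

lemma nontangentialAtInfty_le_cobounded (C : ℝ) : nontangentialAtInfty C ≤ cobounded ℂ :=
  inf_le_left

lemma eventually_mem_nontangentialCone (C : ℝ) :
    ∀ᶠ z in nontangentialAtInfty C, z ∈ nontangentialCone C :=
  mem_inf_of_right (mem_principal_self _)

lemma hasBasis_nontangentialAtInfty (C : ℝ) :
    (nontangentialAtInfty C).HasBasis (0 < ·) fun R ↦ {z | R < ‖z‖} ∩ nontangentialCone C :=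
  (atTop_basis_Ioi' 0).cobounded_of_norm.inf_principal _

variable {C : ℝ} {z : ℂ}

lemma norm_le_mul_im_of_mem_nontangentialCone (hz : z ∈ nontangentialCone C) :
    ‖z‖ ≤ (C + 1) * z.im := by
  calc ‖z‖ ≤ |z.re| + |z.im| := Complex.norm_le_abs_re_add_abs_im z
    _ ≤ C * z.im + z.im := add_le_add hz.2 (abs_of_pos hz.1).le
    _ = (C + 1) * z.im := by ring

lemma im_le_norm_sub_ofReal (z : ℂ) (t : ℝ) : z.im ≤ ‖z - t‖ := by
  simpa using Complex.im_le_norm (z - t)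

lemma norm_mul_inv_sub_ofReal_le (hz : z ∈ nontangentialCone C) (t : ℝ) :
    ‖z * (z - t)⁻¹‖ ≤ C + 1 := by
  have him : 0 < z.im := hz.1
  calc ‖z * (z - t)⁻¹‖ = ‖z‖ / ‖z - t‖ := by rw [← div_eq_mul_inv, norm_div]
    _ ≤ ‖z‖ / z.im := by gcongr; exact im_le_norm_sub_ofReal z t
    _ ≤ C + 1 := (div_le_iff₀ him).mpr (norm_le_mul_im_of_mem_nontangentialCone hz)

lemma tendsto_normalizedVariance_inv_sub_ofReal (μ : Measure ℝ) [IsProbabilityMeasure μ] (C : ℝ) :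
    Tendsto (fun z : ℂ ↦ normalizedVariance (fun t : ℝ ↦ (z - t)⁻¹) μ)
      (nontangentialAtInfty C) (𝓝 0) := by
  have hscaled : Tendsto (fun z : ℂ ↦ normalizedVariance (fun t : ℝ ↦ z * (z - t)⁻¹) μ)
      (nontangentialAtInfty C) (𝓝 0) :=
    tendsto_normalizedVariance_zero_of_dominated one_ne_zero
      (.of_forall fun z ↦ by fun_prop) (memLp_const (C + 1))
      ((eventually_mem_nontangentialCone C).mono fun z hz ↦
        .of_forall (norm_mul_inv_sub_ofReal_le hz))
      (.of_forall fun t ↦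
        (tendsto_mul_inv_sub_cobounded (t : ℂ)).mono_left (nontangentialAtInfty_le_cobounded C))
  refine hscaled.congr' ?_
  filter_upwards [nontangentialAtInfty_le_cobounded C (eventually_ne_cobounded 0)] with z hz
  exact normalizedVariance_const_smul hz (fun t : ℝ ↦ (z - t)⁻¹) μ

end NontangentialLimit

/-- For a Borel probability measure `μ` on `ℝ`,
`(1/|G_μ(λ)|²) · ∫ |(λ - t)⁻¹ - G_μ(λ)|² dμ(t) → 0` as `λ → ∞` nontangentially in the
upper half-plane, where `G_μ` is the Cauchy transform of `μ`. -/
theorem normalized_centered_resolvent_variance_nontangential_limit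
    (μ : Measure ℝ) [IsProbabilityMeasure μ] :
    ∀ C > (0:ℝ), ∀ ε > (0:ℝ), ∃ R > (0:ℝ), ∀ l : ℂ,
      0 < l.im → R < ‖l‖ → |l.re| ≤ C * l.im →
      (∫ t : ℝ, ‖(l - (t:ℂ))⁻¹ - ∫ s : ℝ, (l - (s:ℂ))⁻¹ ∂μ‖^2 ∂μ) /
        ‖∫ s : ℝ, (l - (s:ℂ))⁻¹ ∂μ‖^2 < ε := by
  intro C _ ε hε
  have hsmall := (tendsto_normalizedVariance_inv_sub_ofReal μ C).eventually_lt_const hε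
  obtain ⟨R, hR, hlt⟩ := (hasBasis_nontangentialAtInfty C).eventually_iff.mp hsmall
  exact ⟨R, hR, fun l him hnorm hre ↦ hlt ⟨hnorm, him, hre⟩⟩
end

section
/- Let μ be a Borel probability measure on ℝ whose support has exactly N connected components, where 1 ≤ N < ∞. Then the set {t ∈ ℝ ∖ supp(μ) : G_μ(t) = 0}, where G_μ(t) = ∫_ℝ (t − s)⁻¹ dμ(s), is finite and has at most N − 1 elements; in fact there is at most one such zero in each bounded connected component of ℝ ∖ supp(μ), and none in the unbounded components. -/
open MeasureTheory

/-- The topological support of a measure: the set of points all of whose neighborhoods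
have positive measure. -/
def Measure.msupport {α : Type*} [TopologicalSpace α] {m : MeasurableSpace α}
    (μ : Measure α) : Set α :=
  {x | ∀ U ∈ nhds x, 0 < μ U}

/-!
Adjoin `±∞` to the zeros of `G_μ` off the support, as zeros at infinity. Between any two of these
points on the extended line there is a point of the support: otherwise, off the interval they
bound, the difference of the two kernels `(t - s)⁻¹` (zero at `±∞`) has a constant sign, and so the
two values of `G_μ` differ.

No zero lies on the support, so a component of the support meeting the gap between two zeros is
contained in it. Hence consecutive extended zeros are separated by whole components: `n` extended
zeros require at least `n - 1` components. Two of the extended zeros are `±∞`, which leaves the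
bound `N - 1` for the others.
-/

open Set

section Separation

variable {X α : Type*} [TopologicalSpace X] [TopologicalSpace α] [LinearOrder α]
  [OrderClosedTopology α]

lemma subset_Ioo_of_isPreconnected {P : Set α} (hP : IsPreconnected P) {x y a : α}
    (hx : x ∉ P) (hy : y ∉ P) (haP : a ∈ P) (ha : a ∈ Ioo x y) : P ⊆ Ioo x y := fun _ hb =>
  ⟨not_le.1 fun hbx => hx (hP.Icc_subset hb haP ⟨hbx, ha.1.le⟩),
    not_le.1 fun hyb => hy (hP.Icc_subset haP hb ⟨ha.2.le, hyb⟩)⟩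

lemma mapsTo_connectedComponent_Ioo {f : X → α} (hf : Continuous f) {x y : α}
    (hx : x ∉ range f) (hy : y ∉ range f) {a : X} (ha : f a ∈ Ioo x y) :
    MapsTo f (connectedComponent a) (Ioo x y) :=
  mapsTo_iff_image_subset.2 <|
    subset_Ioo_of_isPreconnected (isPreconnected_connectedComponent.image f hf.continuousOn)
      (fun h => hx (image_subset_range _ _ h)) (fun h => hy (image_subset_range _ _ h))
      (mem_image_of_mem f mem_connectedComponent) ha

lemma card_le_card_connectedComponents_add_one_of_gaps [Finite (ConnectedComponents X)] {f : X → α}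
    (hf : Continuous f) {E : Finset α} (hE : Disjoint (E : Set α) (range f))
    (hgap : ∀ x ∈ E, ∀ y ∈ E, x < y → ∃ a, f a ∈ Ioo x y) :
    E.card ≤ Nat.card (ConnectedComponents X) + 1 := by
  classical
  have := Fintype.ofFinite (ConnectedComponents X)
  let point : ConnectedComponents X → α := fun c => f c.exists_rep.choose
  have hpoint : (Finset.univ.image point).card ≤ Nat.card (ConnectedComponents X) :=
    Finset.card_image_le.trans_eq (by rw [Finset.card_univ, Nat.card_eq_fintype_card])
  suffices E.card ≤ (Finset.univ.image point).card + 1 by lia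
  refine Finset.card_le_of_interleaved fun x hx y hy hxy _ => ?_
  obtain ⟨a, ha⟩ := hgap x hx y hy hxy
  let c : ConnectedComponents X := a
  have hc : c.exists_rep.choose ∈ connectedComponent a :=
    ConnectedComponents.coe_eq_coe'.1 c.exists_rep.choose_spec
  exact ⟨point c, Finset.mem_image_of_mem point (Finset.mem_univ c),
    mapsTo_connectedComponent_Ioo hf (hE.notMem_of_mem_left hx) (hE.notMem_of_mem_left hy) ha hc⟩

lemma finite_and_ncard_le_card_connectedComponents_add_one_of_gaps [Finite (ConnectedComponents X)]
    {f : X → α} (hf : Continuous f) {E : Set α} (hE : Disjoint E (range f))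
    (hgap : ∀ x ∈ E, ∀ y ∈ E, x < y → ∃ a, f a ∈ Ioo x y) :
    E.Finite ∧ E.ncard ≤ Nat.card (ConnectedComponents X) + 1 := by
  have hcard (F : Finset α) (hF : ↑F ⊆ E) : F.card ≤ Nat.card (ConnectedComponents X) + 1 :=
    card_le_card_connectedComponents_add_one_of_gaps hf (hE.mono_left hF)
      fun x hx y hy => hgap x (hF hx) y (hF hy)
  have hfinite : E.Finite := by
    by_contra hinfinite
    obtain ⟨F, hF, hFcard⟩ :=
      Set.Infinite.exists_subset_card_eq hinfinite (Nat.card (ConnectedComponents X) + 2)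
    have := hcard F hF
    lia
  exact ⟨hfinite, ncard_eq_toFinset_card E hfinite ▸ hcard _ (by simp)⟩

end Separation

lemma inv_sub_lt_inv_sub_of_notMem_Icc {K : Type*} [Field K] [LinearOrder K] [IsStrictOrderedRing K]
    {t₁ t₂ s : K} (hlt : t₁ < t₂) (hs : s ∉ Icc t₁ t₂) : (t₂ - s)⁻¹ < (t₁ - s)⁻¹ := by
  rcases lt_or_ge s t₁ with hst₁ | ht₁s
  · exact inv_strictAnti₀ (sub_pos.2 hst₁) (sub_lt_sub_right hlt s)
  · have ht₂s : t₂ < s := not_le.1 fun hst₂ => hs ⟨ht₁s, hst₂⟩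
    exact (inv_lt_inv_of_neg (sub_neg.2 ht₂s) (sub_neg.2 (hlt.trans ht₂s))).2
      (sub_lt_sub_right hlt s)

lemma msupport_eq_support {α : Type*} [TopologicalSpace α] [MeasurableSpace α] (μ : Measure α) :
    Measure.msupport μ = μ.support :=
  ext fun x => (Measure.mem_support_iff_forall x).symm

lemma integral_pos_of_ae_pos {α : Type*} [MeasurableSpace α] {μ : Measure α} [NeZero μ]
    {f : α → ℝ} (hf : Integrable f μ) (hpos : ∀ᵐ s ∂μ, 0 < f s) : 0 < ∫ s, f s ∂μ := by
  have hnonneg : 0 ≤ᵐ[μ] f := hpos.mono fun _ hs => hs.le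
  refine (integral_nonneg_of_ae hnonneg).lt_of_ne' fun hzero => ?_
  obtain ⟨s, hfs, hfs_zero⟩ :=
    (hpos.and ((integral_eq_zero_iff_of_nonneg_ae hnonneg hf).1 hzero)).exists
  exact hfs.ne' hfs_zero

lemma integrable_inv_sub_of_notMem_support {𝕜 : Type*} [NormedDivisionRing 𝕜]
    [MeasurableSpace 𝕜] [BorelSpace 𝕜] [SecondCountableTopology 𝕜] {μ : Measure 𝕜}
    [IsFiniteMeasure μ] {t : 𝕜} (ht : t ∉ μ.support) : Integrable (fun s => (t - s)⁻¹) μ := by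
  obtain ⟨U, hU, hμU⟩ := Measure.notMem_support_iff_exists.1 ht
  obtain ⟨ε, hε, hball⟩ := Metric.mem_nhds_iff.1 hU
  refine Integrable.of_bound (C := ε⁻¹) (by fun_prop) ?_
  filter_upwards [measure_eq_zero_iff_ae_notMem.1 hμU] with s hs
  have hfar : ε ≤ ‖t - s‖ := by
    rw [← dist_eq_norm, dist_comm]
    exact not_lt.1 fun hlt => hs (hball hlt)
  rw [norm_inv]
  exact inv_anti₀ hε hfar

/-- The Cauchy transform `G_μ` on the real line. Off the support of `μ` it is the usual one as soon
as the kernel is integrable; elsewhere the Bochner integral may take its default value `0`. -/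
noncomputable def cauchyTransform (μ : Measure ℝ) (t : ℝ) : ℝ :=
  ∫ s, (t - s)⁻¹ ∂μ

/-- The zeros of the Cauchy transform off the support of the measure. -/
def cauchyZeros (μ : Measure ℝ) : Set ℝ :=
  {t | t ∉ μ.support ∧ cauchyTransform μ t = 0}

/-- The zeros of the Cauchy transform off the support, together with the zeros `±∞` at infinity. -/
def extendedCauchyZeros (μ : Measure ℝ) : Set EReal :=
  insert ⊥ (insert ⊤ ((↑) '' cauchyZeros μ))

section CauchyTransform

variable {μ : Measure ℝ}

lemma ncard_extendedCauchyZeros (hfinite : (cauchyZeros μ).Finite) :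
    (extendedCauchyZeros μ).ncard = (cauchyZeros μ).ncard + 2 := by
  have himage := hfinite.image ((↑) : ℝ → EReal)
  rw [extendedCauchyZeros, ncard_insert_of_notMem (by simp) (himage.insert _),
    ncard_insert_of_notMem (by simp) himage, ncard_image_of_injective _ EReal.coe_injective]

lemma disjoint_extendedCauchyZeros_range_coe :
    Disjoint (extendedCauchyZeros μ) (range fun s : μ.support => ((s : ℝ) : EReal)) := by
  rw [disjoint_right]
  rintro _ ⟨s, rfl⟩ (h | h | ⟨t, ht, hts⟩)
  · exact EReal.coe_ne_bot _ h
  · exact EReal.coe_ne_top _ h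
  · exact ht.1 (EReal.coe_injective hts ▸ s.2)

variable [NeZero μ]

lemma cauchyTransform_pos {t : ℝ} (ht : Integrable (fun s => (t - s)⁻¹) μ)
    (hleft : ∀ s ∈ μ.support, s < t) : 0 < cauchyTransform μ t :=
  integral_pos_of_ae_pos ht <| by
    filter_upwards [Measure.support_mem_ae] with s hs
    exact inv_pos.2 (sub_pos.2 (hleft s hs))

lemma cauchyTransform_neg {t : ℝ} (ht : Integrable (fun s => (t - s)⁻¹) μ)
    (hright : ∀ s ∈ μ.support, t < s) : cauchyTransform μ t < 0 := by
  rw [← neg_pos, cauchyTransform, ← integral_neg]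
  refine integral_pos_of_ae_pos ht.neg ?_
  filter_upwards [Measure.support_mem_ae] with s hs
  exact neg_pos.2 (inv_lt_zero.2 (sub_neg.2 (hright s hs)))

lemma cauchyTransform_lt_cauchyTransform {t₁ t₂ : ℝ} (h₁ : Integrable (fun s => (t₁ - s)⁻¹) μ)
    (h₂ : Integrable (fun s => (t₂ - s)⁻¹) μ) (hlt : t₁ < t₂)
    (hdisj : Disjoint μ.support (Icc t₁ t₂)) : cauchyTransform μ t₂ < cauchyTransform μ t₁ := by
  rw [← sub_pos, cauchyTransform, cauchyTransform, ← integral_sub h₁ h₂]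
  refine integral_pos_of_ae_pos (h₁.sub h₂) ?_
  filter_upwards [Measure.support_mem_ae] with s hs
  exact sub_pos.2 (inv_sub_lt_inv_sub_of_notMem_Icc hlt (hdisj.notMem_of_mem_left hs))

variable (hint : ∀ t ∉ μ.support, Integrable (fun s => (t - s)⁻¹) μ)
include hint

lemma exists_mem_support_lt_of_mem_cauchyZeros {t : ℝ} (ht : t ∈ cauchyZeros μ) :
    ∃ s ∈ μ.support, s < t := by
  by_contra! h
  exact (cauchyTransform_neg (hint t ht.1) fun s hs =>
    (h s hs).lt_of_ne (ne_of_mem_of_not_mem hs ht.1).symm).ne ht.2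

lemma exists_mem_support_gt_of_mem_cauchyZeros {t : ℝ} (ht : t ∈ cauchyZeros μ) :
    ∃ s ∈ μ.support, t < s := by
  by_contra! h
  exact (cauchyTransform_pos (hint t ht.1) fun s hs =>
    (h s hs).lt_of_ne (ne_of_mem_of_not_mem hs ht.1)).ne' ht.2

lemma exists_mem_support_mem_Ioo_of_mem_cauchyZeros {t₁ t₂ : ℝ} (h₁ : t₁ ∈ cauchyZeros μ)
    (h₂ : t₂ ∈ cauchyZeros μ) (hlt : t₁ < t₂) : ∃ s ∈ μ.support, s ∈ Ioo t₁ t₂ := by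
  by_contra! h
  refine (cauchyTransform_lt_cauchyTransform (hint t₁ h₁.1) (hint t₂ h₂.1) hlt ?_).ne
    (h₂.2.trans h₁.2.symm)
  refine disjoint_left.2 fun s hs hsI => h s hs ⟨?_, ?_⟩
  · exact hsI.1.lt_of_ne (ne_of_mem_of_not_mem hs h₁.1).symm
  · exact hsI.2.lt_of_ne (ne_of_mem_of_not_mem hs h₂.1)

lemma exists_coe_mem_Ioo_of_mem_extendedCauchyZeros {x y : EReal}
    (hx : x ∈ extendedCauchyZeros μ) (hy : y ∈ extendedCauchyZeros μ) (hxy : x < y) :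
    ∃ s : μ.support, ((s : ℝ) : EReal) ∈ Ioo x y := by
  rcases hx with rfl | rfl | ⟨t₁, ht₁, rfl⟩ <;> rcases hy with rfl | rfl | ⟨t₂, ht₂, rfl⟩
  · exact absurd hxy (lt_irrefl _)
  · obtain ⟨s, hs⟩ := Measure.nonempty_support (NeZero.ne μ)
    exact ⟨⟨s, hs⟩, EReal.bot_lt_coe s, EReal.coe_lt_top s⟩
  · obtain ⟨s, hs, hst₂⟩ := exists_mem_support_lt_of_mem_cauchyZeros hint ht₂
    exact ⟨⟨s, hs⟩, EReal.bot_lt_coe s, EReal.coe_lt_coe_iff.2 hst₂⟩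
  · exact absurd hxy not_top_lt
  · exact absurd hxy not_top_lt
  · exact absurd hxy not_top_lt
  · exact absurd hxy not_lt_bot
  · obtain ⟨s, hs, ht₁s⟩ := exists_mem_support_gt_of_mem_cauchyZeros hint ht₁
    exact ⟨⟨s, hs⟩, EReal.coe_lt_coe_iff.2 ht₁s, EReal.coe_lt_top s⟩
  · obtain ⟨s, hs, ht₁s, hst₂⟩ :=
      exists_mem_support_mem_Ioo_of_mem_cauchyZeros hint ht₁ ht₂ (EReal.coe_lt_coe_iff.1 hxy)
    exact ⟨⟨s, hs⟩, EReal.coe_lt_coe_iff.2 ht₁s, EReal.coe_lt_coe_iff.2 hst₂⟩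

lemma finite_cauchyZeros_and_ncard_lt [Finite (ConnectedComponents μ.support)] :
    (cauchyZeros μ).Finite ∧ (cauchyZeros μ).ncard < Nat.card (ConnectedComponents μ.support) := by
  obtain ⟨hfiniteExtended, hcard⟩ := finite_and_ncard_le_card_connectedComponents_add_one_of_gaps
    (continuous_coe_real_ereal.comp continuous_subtype_val)
    (disjoint_extendedCauchyZeros_range_coe (μ := μ))
    fun _ hx _ hy => exists_coe_mem_Ioo_of_mem_extendedCauchyZeros hint hx hy
  have hfinite : (cauchyZeros μ).Finite :=
    (hfiniteExtended.subset ((subset_insert _ _).trans (subset_insert _ _))).of_finite_image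
      EReal.coe_injective.injOn
  rw [ncard_extendedCauchyZeros hfinite] at hcard
  exact ⟨hfinite, by lia⟩

lemma injOn_connectedComponentIn_cauchyZeros :
    InjOn (connectedComponentIn μ.supportᶜ) (cauchyZeros μ) := by
  intro t₁ h₁ t₂ h₂ heq
  wlog hlt : t₁ < t₂ generalizing t₁ t₂
  · exact (not_lt.1 hlt).eq_or_lt.elim Eq.symm fun hgt => (this h₂ h₁ heq.symm hgt).symm
  obtain ⟨s, hs, hsI⟩ := exists_mem_support_mem_Ioo_of_mem_cauchyZeros hint h₁ h₂ hlt
  have hIcc : Icc t₁ t₂ ⊆ connectedComponentIn μ.supportᶜ t₁ :=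
    isPreconnected_connectedComponentIn.Icc_subset (mem_connectedComponentIn h₁.1)
      (heq ▸ mem_connectedComponentIn h₂.1)
  exact absurd hs (connectedComponentIn_subset _ _ (hIcc (Ioo_subset_Icc_self hsI)))

lemma isBounded_connectedComponentIn_of_mem_cauchyZeros {t : ℝ} (ht : t ∈ cauchyZeros μ) :
    Bornology.IsBounded (connectedComponentIn μ.supportᶜ t) := by
  obtain ⟨a, ha, hat⟩ := exists_mem_support_lt_of_mem_cauchyZeros hint ht
  obtain ⟨b, hb, htb⟩ := exists_mem_support_gt_of_mem_cauchyZeros hint ht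
  exact (Metric.isBounded_Ioo a b).subset <|
    subset_Ioo_of_isPreconnected isPreconnected_connectedComponentIn
      (fun h => connectedComponentIn_subset _ _ h ha)
      (fun h => connectedComponentIn_subset _ _ h hb) (mem_connectedComponentIn ht.1) ⟨hat, htb⟩

end CauchyTransform

theorem cauchyTransform_zeros_count_general (μ : Measure ℝ) [NeZero μ]
    (hint : ∀ t ∉ μ.support, Integrable (fun s => (t - s)⁻¹) μ)
    [Finite (ConnectedComponents μ.support)] :
    (cauchyZeros μ).Finite ∧
    (cauchyZeros μ).ncard < Nat.card (ConnectedComponents μ.support) ∧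
    InjOn (connectedComponentIn μ.supportᶜ) (cauchyZeros μ) ∧
    ∀ t ∈ cauchyZeros μ, Bornology.IsBounded (connectedComponentIn μ.supportᶜ t) :=
  have ⟨hfinite, hlt⟩ := finite_cauchyZeros_and_ncard_lt hint
  ⟨hfinite, hlt, injOn_connectedComponentIn_cauchyZeros hint,
    fun _ ht => isBounded_connectedComponentIn_of_mem_cauchyZeros hint ht⟩

/-- If the support of a Borel probability measure `μ` on `ℝ` has exactly `N` connected
components (`1 ≤ N < ∞`), then the set of zeros of the Cauchy transform `G_μ` outside the
support is finite, has at most `N - 1` elements, contains at most one point in each connected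
component of the complement of the support, and all these components are bounded. -/
theorem cauchyTransform_zeros_count
    (μ : Measure ℝ) [IsProbabilityMeasure μ] (N : ℕ) (hN : 1 ≤ N)
    (hfin : Finite (ConnectedComponents ↥(Measure.msupport μ)))
    (hcard : Nat.card (ConnectedComponents ↥(Measure.msupport μ)) = N) :
    {t : ℝ | t ∉ Measure.msupport μ ∧ (∫ s, (t - s)⁻¹ ∂μ) = 0}.Finite ∧
    Nat.card {t : ℝ | t ∉ Measure.msupport μ ∧ (∫ s, (t - s)⁻¹ ∂μ) = 0} ≤ N - 1 ∧
    (∀ t₁ ∈ {t : ℝ | t ∉ Measure.msupport μ ∧ (∫ s, (t - s)⁻¹ ∂μ) = 0},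
     ∀ t₂ ∈ {t : ℝ | t ∉ Measure.msupport μ ∧ (∫ s, (t - s)⁻¹ ∂μ) = 0},
      connectedComponentIn (Measure.msupport μ)ᶜ t₁ =
        connectedComponentIn (Measure.msupport μ)ᶜ t₂ → t₁ = t₂) ∧
    (∀ t ∈ {t : ℝ | t ∉ Measure.msupport μ ∧ (∫ s, (t - s)⁻¹ ∂μ) = 0},
      Bornology.IsBounded (connectedComponentIn (Measure.msupport μ)ᶜ t)) := by
  rw [msupport_eq_support] at hfin hcard ⊢
  obtain ⟨hfinite, hlt, hinj, hbdd⟩ :=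
    cauchyTransform_zeros_count_general μ fun _ => integrable_inv_sub_of_notMem_support
  exact ⟨hfinite, Nat.le_sub_one_of_lt (hcard ▸ hlt), fun _ h₁ _ h₂ => hinj h₁ h₂, hbdd⟩
end
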